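/- arXiv:cs/0510029 — 2 statements merged into one kernel-verified Lean document; each statement's English description precedes it below -/
import Mathlib

section
/- Let α and β be random variables on a finite probability space that are conditionally independent of order k, let f and g be functions defined on the value sets of α and β respectively, and set α' = f(α), β' = g(β). Then α' and β' are conditionally independent of order k. -/
open scoped BigOperators Classical

noncomputable section

/-- Probability of an event `E` under a distribution `μ` on a finite sample space `Ω`. -/
def pr {Ω : Type} [Fintype Ω] (μ : Ω → ℝ) (E : Ω → Prop) : ℝ :=
  ∑ ω, if E ω then μ ω else 0

/-- `μ` is a probability distribution on the finite space `Ω`. -/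
def IsProb {Ω : Type} [Fintype Ω] (μ : Ω → ℝ) : Prop :=
  (∀ ω, 0 ≤ μ ω) ∧ ∑ ω, μ ω = 1

/-- Shannon entropy (base 2) of a random variable `α` on a finite probability space. -/
def ent {Ω A : Type} [Fintype Ω] (μ : Ω → ℝ) (α : Ω → A) : ℝ :=
  -∑ a ∈ Finset.univ.image α,
      pr μ (fun ω => α ω = a) * Real.logb 2 (pr μ (fun ω => α ω = a))

/-- Conditional entropy `H(α | β)`. -/
def condEnt {Ω A B : Type} [Fintype Ω] (μ : Ω → ℝ) (α : Ω → A) (β : Ω → B) : ℝ :=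
  ent μ (fun ω => (α ω, β ω)) - ent μ β

/-- Mutual information `I(α : β)`. -/
def mutualInfo {Ω A B : Type} [Fintype Ω] (μ : Ω → ℝ) (α : Ω → A) (β : Ω → B) : ℝ :=
  ent μ α + ent μ β - ent μ (fun ω => (α ω, β ω))

/-- Conditional mutual information `I(α : β | γ)`. -/
def condMutualInfo {Ω A B C : Type} [Fintype Ω] (μ : Ω → ℝ)
    (α : Ω → A) (β : Ω → B) (γ : Ω → C) : ℝ :=
  condEnt μ α γ + condEnt μ β γ - condEnt μ (fun ω => (α ω, β ω)) γ

/-- Independence of two random variables. -/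
def Indep {Ω A B : Type} [Fintype Ω] (μ : Ω → ℝ) (α : Ω → A) (β : Ω → B) : Prop :=
  ∀ (a : A) (b : B),
    pr μ (fun ω => α ω = a ∧ β ω = b) =
      pr μ (fun ω => α ω = a) * pr μ (fun ω => β ω = b)

/-- Auxiliary form of "conditionally independent of order `k`" (explicit `Fintype`):
`α` and `β` are conditionally independent of order `0` if they are independent,
and of order `k + 1` if on some finite probability space there are random variables
`α₀, β₀, α*, β*` such that `(α₀, β₀)` has the same joint distribution as `(α, β)`,
`I(α₀ : β₀ | α*) = 0`, `I(α₀ : β₀ | β*) = 0`, and `α*, β*` are conditionally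
independent of order `k`. -/
def CondIndepOrderAux : ℕ → (Ω A B : Type) → Fintype Ω → (Ω → ℝ) → (Ω → A) → (Ω → B) → Prop
  | 0, _Ω, _A, _B, iΩ, μ, α, β => @Indep _ _ _ iΩ μ α β
  | k+1, _Ω, A, B, iΩ, μ, α, β =>
      ∃ (Ω' A' B' : Type) (iΩ' : Fintype Ω') (μ' : Ω' → ℝ)
        (α₀ : Ω' → A) (β₀ : Ω' → B) (αs : Ω' → A') (βs : Ω' → B'),
        @IsProb _ iΩ' μ' ∧
        (∀ (a : A) (b : B),
          @pr _ iΩ' μ' (fun ω => α₀ ω = a ∧ β₀ ω = b) =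
            @pr _ iΩ μ (fun ω => α ω = a ∧ β ω = b)) ∧
        @condMutualInfo _ _ _ _ iΩ' μ' α₀ β₀ αs = 0 ∧
        @condMutualInfo _ _ _ _ iΩ' μ' α₀ β₀ βs = 0 ∧
        CondIndepOrderAux k Ω' A' B' iΩ' μ' αs βs

/-- Random variables `α` and `β` on a finite probability space are
conditionally independent of order `k`. -/
def CondIndepOrder {Ω A B : Type} [iΩ : Fintype Ω]
    (μ : Ω → ℝ) (α : Ω → A) (β : Ω → B) (k : ℕ) : Prop :=
  CondIndepOrderAux k Ω A B iΩ μ α β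

/-- An `m × n` joint probability matrix: nonnegative entries summing to `1`. -/
def IsJointProbMatrix {m n : ℕ} (M : Matrix (Fin m) (Fin n) ℝ) : Prop :=
  (∀ i j, 0 ≤ M i j) ∧ ∑ i, ∑ j, M i j = 1

/-- `M` is the joint probability matrix of the pair `(α, β)`. -/
def IsJointMatrixOf {Ω : Type} [Fintype Ω] {m n : ℕ} (M : Matrix (Fin m) (Fin n) ℝ)
    (μ : Ω → ℝ) (α : Ω → Fin m) (β : Ω → Fin n) : Prop :=
  ∀ i j, M i j = pr μ (fun ω => α ω = i ∧ β ω = j)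

/-- `M` is a block matrix: rows and columns can be partitioned into two nonempty
parts so that the two diagonal blocks each contain a nonzero element and all
entries outside the diagonal blocks vanish. -/
def IsBlockMatrix {m n : ℕ} (M : Matrix (Fin m) (Fin n) ℝ) : Prop :=
  ∃ (I₁ : Finset (Fin m)) (J₁ : Finset (Fin n)),
    I₁.Nonempty ∧ I₁ᶜ.Nonempty ∧ J₁.Nonempty ∧ J₁ᶜ.Nonempty ∧
    (∃ i ∈ I₁, ∃ j ∈ J₁, M i j ≠ 0) ∧
    (∃ i ∈ I₁ᶜ, ∃ j ∈ J₁ᶜ, M i j ≠ 0) ∧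
    (∀ i j, ((i ∈ I₁ ∧ j ∈ J₁ᶜ) ∨ (i ∈ I₁ᶜ ∧ j ∈ J₁)) → M i j = 0)

/-- `M` is a good matrix: the joint probability matrix of some pair of
conditionally independent random variables (of some finite order). -/
def IsGoodMatrix {m n : ℕ} (M : Matrix (Fin m) (Fin n) ℝ) : Prop :=
  ∃ (Ω : Type) (iΩ : Fintype Ω) (μ : Ω → ℝ) (α : Ω → Fin m) (β : Ω → Fin n) (k : ℕ),
    @IsProb _ iΩ μ ∧ @IsJointMatrixOf _ iΩ _ _ M μ α β ∧
    @CondIndepOrder _ _ _ iΩ μ α β k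

/-- A stochastic matrix: nonnegative entries, all row sums equal to `1`. -/
def IsStochastic {m n : ℕ} (A : Matrix (Fin m) (Fin n) ℝ) : Prop :=
  (∀ i j, 0 ≤ A i j) ∧ ∀ i, ∑ j, A i j = 1

/-- The matrix `D_ε`: diagonal entries `1/2 - ε`, off-diagonal entries `ε`. -/
def Dmat (ε : ℝ) : Matrix (Fin 2) (Fin 2) ℝ :=
  fun i j => if i = j then 1/2 - ε else ε

/-- The distribution of `n` i.i.d. trials, each distributed according to `μ`. -/
def iidMeasure {Ω : Type} [Fintype Ω] (μ : Ω → ℝ) (n : ℕ) : (Fin n → Ω) → ℝ :=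
  fun ωv => ∏ i, μ (ωv i)

/-- The sequence of `n` coordinatewise copies of a random variable. -/
def iidRV {Ω A : Type} (α : Ω → A) (n : ℕ) : (Fin n → Ω) → (Fin n → A) :=
  fun ωv i => α (ωv i)

/-- `(u, v, w)` belongs to the rate region of the pair `(α, β)`. -/
def InRateRegion {Ω A B : Type} [Fintype Ω] (μ : Ω → ℝ) (α : Ω → A) (β : Ω → B)
    (u v w : ℝ) : Prop :=
  0 ≤ u ∧ 0 ≤ v ∧ 0 ≤ w ∧
  ∀ ε > (0:ℝ), ∀ δ > (0:ℝ), ∃ n₀ : ℕ, ∀ n ≥ n₀,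
    ∃ (t : (Fin n → A) × (Fin n → B) → (Fin ⌊(u + δ) * n⌋₊ → Bool))
      (f : (Fin n → A) × (Fin n → B) → (Fin ⌊(v + δ) * n⌋₊ → Bool))
      (g : (Fin n → A) × (Fin n → B) → (Fin ⌊(w + δ) * n⌋₊ → Bool))
      (r : (Fin ⌊(u + δ) * n⌋₊ → Bool) × (Fin ⌊(v + δ) * n⌋₊ → Bool) → (Fin n → A))
      (s : (Fin ⌊(u + δ) * n⌋₊ → Bool) × (Fin ⌊(w + δ) * n⌋₊ → Bool) → (Fin n → B)),
      pr (iidMeasure μ n) (fun ωv =>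
          r (t (iidRV α n ωv, iidRV β n ωv), f (iidRV α n ωv, iidRV β n ωv)) = iidRV α n ωv)
        > 1 - ε ∧
      pr (iidMeasure μ n) (fun ωv =>
          s (t (iidRV α n ωv, iidRV β n ωv), g (iidRV α n ωv, iidRV β n ωv)) = iidRV β n ωv)
        > 1 - ε

/-- The support of a matrix: the set of positions of its nonzero entries. -/
def msupport {m n : ℕ} (M : Matrix (Fin m) (Fin n) ℝ) : Set (Fin m × Fin n) :=
  {p | M p.1 p.2 ≠ 0}

/-- An r-matrix: nonnegative entries and rectangular support. -/
def IsRMatrix {m n : ℕ} (M : Matrix (Fin m) (Fin n) ℝ) : Prop :=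
  (∀ i j, 0 ≤ M i j) ∧ ∃ (A : Set (Fin m)) (B : Set (Fin n)), msupport M = A ×ˢ B

/-- An r-decomposition of `M`: an expression of `M` as a finite sum of r-matrices
such that the supports of consecutive summands intersect. -/
def IsRDecomposition {m n : ℕ} (M : Matrix (Fin m) (Fin n) ℝ)
    (l : ℕ) (Ms : Fin l → Matrix (Fin m) (Fin n) ℝ) : Prop :=
  M = ∑ i, Ms i ∧ (∀ i, IsRMatrix (Ms i)) ∧
  ∀ (i : ℕ) (h : i + 1 < l),
    (msupport (Ms ⟨i, Nat.lt_of_succ_lt h⟩) ∩ msupport (Ms ⟨i + 1, h⟩)).Nonempty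

end

lemma pr_nonneg' {Ω : Type} [Fintype Ω] (μ : Ω → ℝ) (hμ : ∀ ω, 0 ≤ μ ω) (E : Ω → Prop) :
    0 ≤ pr μ E := by
  unfold pr
  exact Finset.sum_nonneg fun ω _ => by split_ifs <;> simp [hμ]

lemma le_pr' {Ω : Type} [Fintype Ω] (μ : Ω → ℝ) (hμ : ∀ ω, 0 ≤ μ ω) (E : Ω → Prop)
    (ω : Ω) (h : E ω) : μ ω ≤ pr μ E := by
  unfold pr
  have := Finset.single_le_sum (f := fun ω => if E ω then μ ω else 0)
    (fun ω _ => by split_ifs <;> simp [hμ]) (Finset.mem_univ ω)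
  simpa [h] using this

lemma pr_congr' {Ω : Type} [Fintype Ω] (μ : Ω → ℝ) {E F : Ω → Prop} (h : ∀ ω, E ω ↔ F ω) :
    pr μ E = pr μ F := by
  have : E = F := funext fun ω => propext (h ω)
  rw [this]

/-- Push-forward formula for the probability of an event depending on `W`. -/
lemma pr_push {Ω D : Type} [Fintype Ω] (μ : Ω → ℝ) (W : Ω → D) (E : D → Prop)
    (S : Finset D) (hS : ∀ ω, W ω ∈ S) :
    pr μ (fun ω => E (W ω)) = ∑ d ∈ S, if E d then pr μ (fun ω => W ω = d) else 0 := by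
  unfold pr
  have : ∀ d ∈ S, (if E d then ∑ ω, (if W ω = d then μ ω else 0) else 0)
      = ∑ ω, if W ω = d then (if E (W ω) then μ ω else 0) else 0 := by
    intro d _
    split_ifs with h
    · refine Finset.sum_congr rfl fun ω _ => ?_
      by_cases hw : W ω = d
      · simp [hw, h]
      · simp [hw]
    · symm
      refine Finset.sum_eq_zero fun ω _ => ?_
      by_cases hw : W ω = d
      · simp [hw, h]
      · simp [hw]
  rw [Finset.sum_congr rfl this, Finset.sum_comm]
  refine Finset.sum_congr rfl fun ω _ => ?_
  rw [Finset.sum_ite_eq]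
  simp [hS]

/-- Pointwise form of entropy. -/
lemma ent_eq {Ω A : Type} [Fintype Ω] (μ : Ω → ℝ) (α : Ω → A) :
    ent μ α = -∑ ω, μ ω * Real.logb 2 (pr μ (fun ω' => α ω' = α ω)) := by
  unfold ent
  congr 1
  rw [← Finset.sum_fiberwise_of_maps_to (s := Finset.univ) (t := Finset.univ.image α) (g := α)
    (fun ω _ => Finset.mem_image_of_mem _ (Finset.mem_univ ω))]
  refine Finset.sum_congr rfl fun a _ => ?_
  have : ∀ ω ∈ Finset.univ.filter (fun ω => α ω = a),
      μ ω * Real.logb 2 (pr μ (fun ω' => α ω' = α ω))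
        = μ ω * Real.logb 2 (pr μ (fun ω' => α ω' = a)) := by
    intro ω hω
    rw [(Finset.mem_filter.mp hω).2]
  rw [Finset.sum_congr rfl this, ← Finset.sum_mul, Finset.sum_filter]
  rfl

lemma ent_congr {Ω A B : Type} [Fintype Ω] (μ : Ω → ℝ) (α : Ω → A) (β : Ω → B)
    (h : ∀ ω ω', α ω = α ω' ↔ β ω = β ω') : ent μ α = ent μ β := by
  rw [ent_eq, ent_eq]
  congr 1
  refine Finset.sum_congr rfl fun ω _ => ?_
  rw [pr_congr' μ (fun ω' => h ω' ω)]

lemma sum_fiber_le_one {Ω D : Type} [Fintype Ω] (μ : Ω → ℝ) (W : Ω → D) (d : D) :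
    ∑ ω, (if W ω = d then μ ω / pr μ (fun ω' => W ω' = W ω) else 0) ≤ 1 := by
  have : ∀ ω, (if W ω = d then μ ω / pr μ (fun ω' => W ω' = W ω) else 0)
      = (if W ω = d then μ ω else 0) / pr μ (fun ω' => W ω' = d) := by
    intro ω
    by_cases h : W ω = d
    · simp [h]
    · simp [h]
  rw [Finset.sum_congr rfl (fun ω _ => this ω), ← Finset.sum_div]
  exact div_self_le_one _

lemma sum_ratio_le {Ω A B C : Type} [Fintype Ω] (μ : Ω → ℝ) (hμ : ∀ ω, 0 ≤ μ ω)
    (X : Ω → A) (Y : Ω → B) (Z : Ω → C) :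
    ∑ ω, μ ω * (pr μ (fun ω' => (X ω', Z ω') = (X ω, Z ω))
        * pr μ (fun ω' => (Y ω', Z ω') = (Y ω, Z ω))
        / (pr μ (fun ω' => ((X ω', Y ω'), Z ω') = ((X ω, Y ω), Z ω))
          * pr μ (fun ω' => Z ω' = Z ω))) ≤ ∑ ω, μ ω := by
  have e1 : ∀ ω, μ ω * (pr μ (fun ω' => (X ω', Z ω') = (X ω, Z ω))
        * pr μ (fun ω' => (Y ω', Z ω') = (Y ω, Z ω))
        / (pr μ (fun ω' => ((X ω', Y ω'), Z ω') = ((X ω, Y ω), Z ω))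
          * pr μ (fun ω' => Z ω' = Z ω)))
      = ∑ a, ∑ b, (if Z b = Z a then μ a * (μ b / pr μ (fun ω' => Z ω' = Z a)) else 0) *
          (if ((X ω, Y ω), Z ω) = ((X a, Y b), Z a) then
            μ ω / pr μ (fun ω' => ((X ω', Y ω'), Z ω') = ((X ω, Y ω), Z ω)) else 0) := by
    intro ω
    have : pr μ (fun ω' => (X ω', Z ω') = (X ω, Z ω))
        * pr μ (fun ω' => (Y ω', Z ω') = (Y ω, Z ω))
        = ∑ a, ∑ b, (if (X a, Z a) = (X ω, Z ω) then μ a else 0) *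
            (if (Y b, Z b) = (Y ω, Z ω) then μ b else 0) := by
      unfold pr
      rw [Finset.sum_mul_sum]
      refine Finset.sum_congr rfl fun a _ => Finset.sum_congr rfl fun b _ => ?_
      congr
    rw [this, Finset.sum_div, Finset.mul_sum]
    refine Finset.sum_congr rfl fun a _ => ?_
    rw [Finset.sum_div, Finset.mul_sum]
    refine Finset.sum_congr rfl fun b _ => ?_
    simp only [Prod.mk.injEq]
    by_cases hX : X a = X ω
    · by_cases hY : Y b = Y ω
      · by_cases hZ : Z a = Z ω
        · by_cases hZ' : Z b = Z ω
          · simp only [hX, hY, hZ, hZ', and_self, if_true]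
            simp only [div_eq_mul_inv, mul_inv]
            ring
          · simp [hZ, hZ']
        · simp [hZ, Ne.symm hZ]
      · simp [hY, Ne.symm hY]
    · simp [hX, Ne.symm hX]
  rw [Finset.sum_congr rfl (fun ω _ => e1 ω), Finset.sum_comm]
  refine Finset.sum_le_sum fun a _ => ?_
  rw [Finset.sum_comm]
  calc _ ≤ ∑ b, (if Z b = Z a then μ a * (μ b / pr μ (fun ω' => Z ω' = Z a)) else 0) := by
        refine Finset.sum_le_sum fun b _ => ?_
        rw [← Finset.mul_sum]
        refine mul_le_of_le_one_right ?_ ?_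
        · split_ifs
          · exact mul_nonneg (hμ a) (div_nonneg (hμ b) (pr_nonneg' μ hμ _))
          · exact le_rfl
        · refine le_trans (le_of_eq ?_) (sum_fiber_le_one μ (fun ω => ((X ω, Y ω), Z ω)) ((X a, Y b), Z a))
          refine Finset.sum_congr rfl fun ω _ => ?_
          congr
    _ = μ a * ∑ b, (if Z b = Z a then μ b / pr μ (fun ω' => Z ω' = Z b) else 0) := by
        rw [Finset.mul_sum]
        refine Finset.sum_congr rfl fun b _ => ?_
        by_cases h : Z b = Z a
        · simp [h]
        · simp [h]
    _ ≤ μ a := mul_le_of_le_one_right (hμ a) (sum_fiber_le_one μ Z (Z a))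

lemma condMutualInfo_nonneg {Ω A B C : Type} [Fintype Ω] (μ : Ω → ℝ) (hμ : ∀ ω, 0 ≤ μ ω)
    (X : Ω → A) (Y : Ω → B) (Z : Ω → C) : 0 ≤ condMutualInfo μ X Y Z := by
  have key := sum_ratio_le μ hμ X Y Z
  have h2 : (0:ℝ) < Real.log 2 := Real.log_pos (by norm_num)
  have e : condMutualInfo μ X Y Z * Real.log 2 = ∑ ω, μ ω *
      (Real.log (pr μ (fun ω' => ((X ω', Y ω'), Z ω') = ((X ω, Y ω), Z ω)))
        + Real.log (pr μ (fun ω' => Z ω' = Z ω))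
        - Real.log (pr μ (fun ω' => (X ω', Z ω') = (X ω, Z ω)))
        - Real.log (pr μ (fun ω' => (Y ω', Z ω') = (Y ω, Z ω)))) := by
    unfold condMutualInfo condEnt
    simp only [ent_eq, mul_sub, mul_add, Finset.sum_sub_distrib, Finset.sum_add_distrib,
      Real.logb, ← mul_div_assoc, ← Finset.sum_div]
    field_simp
    ring
  have h3 : 0 ≤ condMutualInfo μ X Y Z * Real.log 2 := by
    rw [e]
    rw [← sub_nonneg, ← Finset.sum_sub_distrib] at key
    refine key.trans (Finset.sum_le_sum fun ω _ => ?_)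
    rcases (hμ ω).eq_or_lt with h0 | h0
    · simp [← h0]
    have p1 := h0.trans_le (le_pr' μ hμ (fun ω' => ((X ω', Y ω'), Z ω') = ((X ω, Y ω), Z ω)) ω rfl)
    have p2 := h0.trans_le (le_pr' μ hμ (fun ω' => Z ω' = Z ω) ω rfl)
    have p3 := h0.trans_le (le_pr' μ hμ (fun ω' => (X ω', Z ω') = (X ω, Z ω)) ω rfl)
    have p4 := h0.trans_le (le_pr' μ hμ (fun ω' => (Y ω', Z ω') = (Y ω, Z ω)) ω rfl)
    have hl := Real.log_le_sub_one_of_pos (div_pos (mul_pos p3 p4) (mul_pos p1 p2))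
    rw [Real.log_div (mul_pos p3 p4).ne' (mul_pos p1 p2).ne', Real.log_mul p3.ne' p4.ne',
      Real.log_mul p1.ne' p2.ne'] at hl
    rw [← mul_one_sub]
    exact mul_le_mul_of_nonneg_left (by linarith) h0.le
  exact nonneg_of_mul_nonneg_left h3 h2

lemma condMutualInfo_symm {Ω A B C : Type} [Fintype Ω] (μ : Ω → ℝ)
    (X : Ω → A) (Y : Ω → B) (Z : Ω → C) : condMutualInfo μ X Y Z = condMutualInfo μ Y X Z := by
  unfold condMutualInfo condEnt
  rw [ent_congr μ (fun ω => ((X ω, Y ω), Z ω)) (fun ω => ((Y ω, X ω), Z ω))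
    (by intro a b; simp only [Prod.mk.injEq]; tauto)]
  ring

lemma condMutualInfo_comp_le {Ω A A' B C : Type} [Fintype Ω] (μ : Ω → ℝ) (hμ : ∀ ω, 0 ≤ μ ω)
    (X : Ω → A) (Y : Ω → B) (Z : Ω → C) (f : A → A') :
    condMutualInfo μ (fun ω => f (X ω)) Y Z ≤ condMutualInfo μ X Y Z := by
  have h := condMutualInfo_nonneg μ hμ X Y (fun ω => (f (X ω), Z ω))
  unfold condMutualInfo condEnt at *
  rw [ent_congr μ (fun ω => (X ω, f (X ω), Z ω)) (fun ω => (X ω, Z ω))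
      (by intro a b; simp only [Prod.mk.injEq]; grind),
    ent_congr μ (fun ω => ((X ω, Y ω), f (X ω), Z ω)) (fun ω => ((X ω, Y ω), Z ω))
      (by intro a b; simp only [Prod.mk.injEq]; grind),
    ent_congr μ (fun ω => (Y ω, f (X ω), Z ω)) (fun ω => ((f (X ω), Y ω), Z ω))
      (by intro a b; simp only [Prod.mk.injEq]; tauto)] at h
  linarith

lemma condMutualInfo_comp_eq_zero {Ω A A' B B' C : Type} [Fintype Ω] (μ : Ω → ℝ)
    (hμ : ∀ ω, 0 ≤ μ ω) (X : Ω → A) (Y : Ω → B) (Z : Ω → C) (f : A → A') (g : B → B')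
    (h : condMutualInfo μ X Y Z = 0) :
    condMutualInfo μ (fun ω => f (X ω)) (fun ω => g (Y ω)) Z = 0 := by
  refine le_antisymm ?_ (condMutualInfo_nonneg μ hμ _ _ _)
  have h1 := condMutualInfo_comp_le μ hμ X (fun ω => g (Y ω)) Z f
  have h2 := condMutualInfo_comp_le μ hμ Y X Z g
  rw [condMutualInfo_symm μ X] at h1
  rw [condMutualInfo_symm μ Y X] at h2
  linarith

lemma joint_comp {Ω Ω' A B A' B' : Type} [Fintype Ω] [Fintype Ω'] (μ : Ω → ℝ) (μ' : Ω' → ℝ)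
    (α : Ω → A) (β : Ω → B) (α₀ : Ω' → A) (β₀ : Ω' → B) (f : A → A') (g : B → B')
    (h : ∀ a b, pr μ' (fun ω => α₀ ω = a ∧ β₀ ω = b) = pr μ (fun ω => α ω = a ∧ β ω = b))
    (a : A') (b : B') :
    pr μ' (fun ω => f (α₀ ω) = a ∧ g (β₀ ω) = b) = pr μ (fun ω => f (α ω) = a ∧ g (β ω) = b) := by
  let S : Finset (A × B) := Finset.univ.image (fun ω => (α ω, β ω)) ∪
    Finset.univ.image (fun ω => (α₀ ω, β₀ ω))
  have h1 := pr_push μ (fun ω => (α ω, β ω)) (fun p => f p.1 = a ∧ g p.2 = b) S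
    (fun ω => Finset.mem_union_left _ (Finset.mem_image_of_mem _ (Finset.mem_univ ω)))
  have h2 := pr_push μ' (fun ω => (α₀ ω, β₀ ω)) (fun p => f p.1 = a ∧ g p.2 = b) S
    (fun ω => Finset.mem_union_right _ (Finset.mem_image_of_mem _ (Finset.mem_univ ω)))
  dsimp only at h1 h2
  rw [h1, h2]
  refine Finset.sum_congr rfl fun p _ => ?_
  have := h p.1 p.2
  rw [pr_congr' μ (F := fun ω => α ω = p.1 ∧ β ω = p.2) (fun ω => by rw [Prod.ext_iff]),
    pr_congr' μ' (F := fun ω => α₀ ω = p.1 ∧ β₀ ω = p.2) (fun ω => by rw [Prod.ext_iff]), this]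

lemma indep_comp {Ω A B A' B' : Type} [Fintype Ω] (μ : Ω → ℝ)
    (α : Ω → A) (β : Ω → B) (f : A → A') (g : B → B') (h : Indep μ α β) :
    Indep μ (fun ω => f (α ω)) (fun ω => g (β ω)) := by
  intro a b
  have m1 : ∀ ω, α ω ∈ Finset.univ.image α :=
    fun ω => Finset.mem_image_of_mem _ (Finset.mem_univ ω)
  have m2 : ∀ ω, β ω ∈ Finset.univ.image β :=
    fun ω => Finset.mem_image_of_mem _ (Finset.mem_univ ω)
  have h1 := pr_push μ α (fun x => f x = a) _ m1
  have h2 := pr_push μ β (fun x => g x = b) _ m2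
  have h3 := pr_push μ (fun ω => (α ω, β ω)) (fun p => f p.1 = a ∧ g p.2 = b)
    (Finset.univ.image α ×ˢ Finset.univ.image β)
    (fun ω => Finset.mem_product.mpr ⟨m1 ω, m2 ω⟩)
  dsimp only at h1 h2 h3
  dsimp only
  rw [h1, h2, h3, Finset.sum_mul_sum, Finset.sum_product]
  refine Finset.sum_congr rfl fun x _ => Finset.sum_congr rfl fun y _ => ?_
  rw [pr_congr' μ (F := fun ω => α ω = x ∧ β ω = y) (fun ω => by rw [Prod.ext_iff]), h x y]
  by_cases hx : f x = a <;> by_cases hy : g y = b <;> simp [hx, hy]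

/-- If `α` and `β` are conditionally independent of order `k` and
`f`, `g` are functions on their value sets, then `α' = f(α)` and `β' = g(β)` are
conditionally independent of order `k`. -/
theorem condIndepOrder_comp {Ω A B A' B' : Type} [Fintype Ω]
    (μ : Ω → ℝ) (hμ : IsProb μ) (α : Ω → A) (β : Ω → B)
    (f : A → A') (g : B → B') (k : ℕ) (h : CondIndepOrder μ α β k) :
    CondIndepOrder μ (fun ω => f (α ω)) (fun ω => g (β ω)) k := by
  cases k with
  | zero => exact indep_comp μ α β f g h
  | succ k =>
    obtain ⟨Ω', C, D, iΩ', μ', α₀, β₀, αs, βs, hp, hj, h1, h2, hk⟩ := h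
    exact ⟨Ω', C, D, iΩ', μ', fun ω => f (α₀ ω), fun ω => g (β₀ ω), αs, βs, hp,
      joint_comp μ μ' α β α₀ β₀ f g hj,
      condMutualInfo_comp_eq_zero μ' hp.1 α₀ β₀ αs f g h1,
      condMutualInfo_comp_eq_zero μ' hp.1 α₀ β₀ βs f g h2, hk⟩
end

section
/- If 0 ≤ ε ≤ 1/2 and D_ε is a good joint probability matrix, then D_{ε(1−ε)} is a good joint probability matrix. -/
open scoped BigOperators Classical

lemma ent_eq_sum {Ω A : Type} [Fintype Ω] (μ : Ω → ℝ) (X : Ω → A) :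
    ent μ X = -∑ ω, μ ω * Real.logb 2 (pr μ (fun ω' => X ω' = X ω)) := by
  unfold ent
  congr 1
  have h := Finset.sum_fiberwise_of_maps_to (s := (Finset.univ : Finset Ω))
    (t := Finset.univ.image X) (g := X)
    (fun ω _ => Finset.mem_image_of_mem X (Finset.mem_univ ω))
    (fun ω => μ ω * Real.logb 2 (pr μ (fun ω' => X ω' = X ω)))
  rw [← h]
  refine Finset.sum_congr rfl fun a _ => ?_
  have h2 : ∑ i ∈ Finset.univ.filter (fun i => X i = a),
      μ i * Real.logb 2 (pr μ (fun ω' => X ω' = X i)) =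
      ∑ i ∈ Finset.univ.filter (fun i => X i = a),
      μ i * Real.logb 2 (pr μ (fun ω' => X ω' = a)) := by
    refine Finset.sum_congr rfl fun i hi => ?_
    rw [(Finset.mem_filter.1 hi).2]
  rw [h2, ← Finset.sum_mul, Finset.sum_filter]
  rfl

lemma pr_pos_of {Ω : Type} [Fintype Ω] (μ : Ω → ℝ) (h : ∀ ω, 0 ≤ μ ω) (E : Ω → Prop)
    (ω : Ω) (hE : E ω) (hω : 0 < μ ω) : 0 < pr μ E := by
  unfold pr
  refine Finset.sum_pos' (fun i _ => ?_) ⟨ω, Finset.mem_univ _, ?_⟩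
  · split_ifs
    · exact h i
    · exact le_rfl
  · rw [if_pos hE]; exact hω

lemma cmi_eq_zero {Ω A B C : Type} [Fintype Ω] (μ : Ω → ℝ) (h : ∀ ω, 0 ≤ μ ω)
    (α : Ω → A) (β : Ω → B) (γ : Ω → C)
    (hf : ∀ a b c, pr μ (fun ω => ((α ω, β ω), γ ω) = ((a, b), c)) * pr μ (fun ω => γ ω = c) =
      pr μ (fun ω => (α ω, γ ω) = (a, c)) * pr μ (fun ω => (β ω, γ ω) = (b, c))) :
    condMutualInfo μ α β γ = 0 := by
  unfold condMutualInfo condEnt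
  simp only [ent_eq_sum]
  have key : ∑ ω, (μ ω * Real.logb 2 (pr μ (fun ω' => ((α ω', β ω'), γ ω') = ((α ω, β ω), γ ω)))
      + μ ω * Real.logb 2 (pr μ (fun ω' => γ ω' = γ ω))
      - μ ω * Real.logb 2 (pr μ (fun ω' => (α ω', γ ω') = (α ω, γ ω)))
      - μ ω * Real.logb 2 (pr μ (fun ω' => (β ω', γ ω') = (β ω, γ ω)))) = 0 := by
    refine Finset.sum_eq_zero fun ω _ => ?_
    rcases (h ω).eq_or_lt with h0 | h0
    · simp [← h0]
    · have e := congrArg (Real.logb 2) (hf (α ω) (β ω) (γ ω))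
      rw [Real.logb_mul
          (pr_pos_of μ h (fun ω' => ((α ω', β ω'), γ ω') = ((α ω, β ω), γ ω)) ω rfl h0).ne'
          (pr_pos_of μ h (fun ω' => γ ω' = γ ω) ω rfl h0).ne',
        Real.logb_mul
          (pr_pos_of μ h (fun ω' => (α ω', γ ω') = (α ω, γ ω)) ω rfl h0).ne'
          (pr_pos_of μ h (fun ω' => (β ω', γ ω') = (β ω, γ ω)) ω rfl h0).ne'] at e
      linear_combination μ ω * e
  simp only [Finset.sum_sub_distrib, Finset.sum_add_distrib] at key
  linarith

lemma pr_fst {Ω A : Type} [Fintype Ω] (μ : Ω → ℝ) (α : Ω → A) (β : Ω → Fin 2) (a : A) :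
    pr μ (fun ω => α ω = a) = ∑ b, pr μ (fun ω => α ω = a ∧ β ω = b) := by
  unfold pr
  rw [Finset.sum_comm]
  refine Finset.sum_congr rfl fun ω _ => ?_
  by_cases h : α ω = a <;> simp [h]

lemma pr_snd {Ω A : Type} [Fintype Ω] (μ : Ω → ℝ) (α : Ω → Fin 2) (β : Ω → A) (b : A) :
    pr μ (fun ω => β ω = b) = ∑ a, pr μ (fun ω => α ω = a ∧ β ω = b) := by
  simp only [and_comm, pr_fst μ β α b]

lemma aux_congr (k : ℕ) {Ω Ω' : Type} (i : Fintype Ω) (i' : Fintype Ω') (μ : Ω → ℝ) (μ' : Ω' → ℝ)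
    (α β : Ω → Fin 2) (α' β' : Ω' → Fin 2)
    (h : ∀ a b, pr μ (fun ω => α ω = a ∧ β ω = b) = pr μ' (fun ω => α' ω = a ∧ β' ω = b))
    (hk : CondIndepOrderAux k Ω (Fin 2) (Fin 2) i μ α β) :
    CondIndepOrderAux k Ω' (Fin 2) (Fin 2) i' μ' α' β' := by
  cases k with
  | zero =>
    intro a b
    have := hk a b
    rw [pr_fst μ α β, pr_snd μ α β] at this
    rw [pr_fst μ' α' β', pr_snd μ' α' β']
    simpa only [h] using this
  | succ k =>
    obtain ⟨Ω₁, A', B', i₁, μ₁, α₀, β₀, αs, βs, h1, h2, h3⟩ := hk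
    exact ⟨Ω₁, A', B', i₁, μ₁, α₀, β₀, αs, βs, h1, fun a b => (h2 a b).trans (h a b), h3⟩

/-- The coupling of `(α, β, α*, β*)`. -/
noncomputable def stepMeasure (ε : ℝ) : Fin 2 × Fin 2 × Fin 2 × Fin 2 → ℝ := fun x =>
  if x.1 = x.2.1 then
    (if x.2.2.1 = x.2.2.2 then (if x.2.2.1 = x.1 then (1 - 2 * ε) / 2 else 0) else ε ^ 2 / 2)
  else (if x.2.2.1 = x.2.2.2 then 0 else ε * (1 - ε) / 2)

/-- If `0 ≤ ε ≤ 1/2` and `D_ε` is a good joint probability matrix,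
then `D_{ε(1−ε)}` is a good joint probability matrix. -/
theorem isGoodMatrix_Dmat_step (ε : ℝ) (h0 : 0 ≤ ε) (h1 : ε ≤ 1/2)
    (h : IsGoodMatrix (Dmat ε)) :
    IsGoodMatrix (Dmat (ε * (1 - ε))) := by
  obtain ⟨Ω, iΩ, μ, α, β, k, hμ, hM, hk⟩ := h
  have hnn : ∀ x, 0 ≤ stepMeasure ε x := by
    intro x
    unfold stepMeasure
    split_ifs
    · linarith
    · exact le_rfl
    · positivity
    · exact le_rfl
    · have : 0 ≤ ε * (1 - ε) := mul_nonneg h0 (by linarith)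
      linarith
  have hp : IsProb (stepMeasure ε) := by
    refine ⟨hnn, ?_⟩
    simp [Fintype.sum_prod_type, Fin.sum_univ_two, stepMeasure]
    ring
  refine ⟨_, inferInstance, stepMeasure ε, fun x => x.1, fun x => x.2.1, k + 1, hp, ?_, ?_⟩
  · intro i j
    fin_cases i <;> fin_cases j <;>
      simp [Dmat, pr, Fintype.sum_prod_type, Fin.sum_univ_two, stepMeasure] <;> ring
  · refine ⟨_, Fin 2, Fin 2, inferInstance, stepMeasure ε, fun x => x.1, fun x => x.2.1,
      fun x => x.2.2.1, fun x => x.2.2.2, hp, fun _ _ => rfl, ?_, ?_, ?_⟩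
    · apply cmi_eq_zero _ hnn
      intro a b c
      fin_cases a <;> fin_cases b <;> fin_cases c <;>
        simp [pr, Fintype.sum_prod_type, Fin.sum_univ_two, stepMeasure] <;> ring
    · apply cmi_eq_zero _ hnn
      intro a b c
      fin_cases a <;> fin_cases b <;> fin_cases c <;>
        simp [pr, Fintype.sum_prod_type, Fin.sum_univ_two, stepMeasure] <;> ring
    · refine aux_congr k iΩ _ μ _ α β _ _ ?_ hk
      intro i j
      rw [← hM i j]
      fin_cases i <;> fin_cases j <;>
        simp [Dmat, pr, Fintype.sum_prod_type, Fin.sum_univ_two, stepMeasure] <;> ring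
end
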